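/- arXiv:2302.02426 — 2 statements merged into one kernel-verified Lean document; each statement's English description precedes it below -/
import Mathlib

section
/- Let (Ω, F, P) be a probability space with a filtration (H_t)_{t∈ℕ} and let (Z_t)_{t∈ℕ} be a real-valued process adapted to (H_t) with Z_0 = 0. Let t₀ be a positive integer and let θ ≥ 0 and 0 < ν ≤ ν_max be constants such that: (i) for every t, almost surely on the event {Z_t ≥ θ}, E[Z_{t+t₀} − Z_t | H_t] ≤ −ν t₀; and (ii) |Z_{t+1} − Z_t| ≤ ν_max almost surely for every t. Then for every t and every p ∈ (0,1), P(Z_t ≥ z) ≤ p, where z = θ + t₀ ν_max + t₀ (4ν_max²/ν)(log(8ν_max²/ν²) + log(1/p)). -/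
open MeasureTheory

theorem aux_exp (x : ℝ) (h : |x| ≤ 1) : Real.exp x ≤ 1 + x + x ^ 2 := by
  have := (abs_le.mp (Real.abs_exp_sub_one_sub_id_le h)).2
  linarith

theorem aux_bdd {Ω : Type*} {mΩ : MeasurableSpace Ω} (μ : Measure Ω)
    (Z : ℕ → Ω → ℝ) (M : ℝ) (hbdd : ∀ t, ∀ᵐ ω ∂μ, |Z (t + 1) ω - Z t ω| ≤ M) (t n : ℕ) :
    ∀ᵐ ω ∂μ, |Z (t + n) ω - Z t ω| ≤ n * M := by
  induction n with
  | zero => simp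
  | succ n ih =>
    filter_upwards [ih, hbdd (t + n)] with ω h1 h2
    rw [abs_le] at *
    push_cast
    rw [← add_assoc]
    constructor <;> linarith [h1.1, h1.2, h2.1, h2.2]

/-- one step -/
theorem aux_step {Ω : Type*} (m : MeasurableSpace Ω) {mΩ : MeasurableSpace Ω} (μ : Measure Ω)
    [IsProbabilityMeasure μ] (hm : m ≤ mΩ) (Y X : Ω → ℝ) (hY : Measurable[m] Y)
    (hX : Measurable X) (K θ d L r : ℝ) (hr : 0 ≤ r) (hrL : r * L ≤ 1)
    (hYK : ∀ᵐ ω ∂μ, |Y ω| ≤ K) (hXL : ∀ᵐ ω ∂μ, |X ω| ≤ L)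
    (hρ : 0 ≤ 1 - r * d + (r * L) ^ 2)
    (hd : ∀ᵐ ω ∂μ, θ ≤ Y ω → (μ[X | m]) ω ≤ - d) :
    ∫ ω, Real.exp (r * (Y ω + X ω)) ∂μ ≤
      (1 - r * d + (r * L) ^ 2) * ∫ ω, Real.exp (r * Y ω) ∂μ + Real.exp (r * (θ + L)) := by
  set S : Set Ω := {ω | θ ≤ Y ω} with hS
  have hSm : MeasurableSet[m] S := hY measurableSet_Ici
  set g : Ω → ℝ := S.indicator (fun ω => Real.exp (r * Y ω)) with hg
  have hem : Measurable[m] (fun ω => Real.exp (r * Y ω)) :=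
    Real.measurable_exp.comp (hY.const_mul r)
  have hgm : Measurable[m] g := hem.indicator hSm
  have hgm' : Measurable g := hgm.mono hm le_rfl
  have hem' : Measurable (fun ω => Real.exp (r * Y ω)) := hem.mono hm le_rfl
  have hY' : Measurable Y := hY.mono hm le_rfl
  have heI : Integrable (fun ω => Real.exp (r * Y ω)) μ := by
    refine Integrable.of_bound hem'.aestronglyMeasurable (Real.exp (r * K)) ?_
    filter_upwards [hYK] with ω h
    rw [Real.norm_eq_abs, Real.abs_exp]
    exact Real.exp_le_exp.mpr (mul_le_mul_of_nonneg_left (abs_le.mp h).2 hr)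
  have hgI : Integrable g μ := heI.indicator (hm _ hSm)
  have hXI : Integrable X μ := Integrable.of_bound hX.aestronglyMeasurable L hXL
  have hgXI : Integrable (g * X) μ := by
    have := hgI.mul_bdd (c := L) hX.aestronglyMeasurable hXL
    exact this
  have hg0 : ∀ ω, 0 ≤ g ω := fun ω => Set.indicator_nonneg (fun _ _ => (Real.exp_pos _).le) _
  have hpull := condExp_mul_of_stronglyMeasurable_left (μ := μ) (m := m)
    hgm.stronglyMeasurable hgXI hXI
  have h1 : ∫ ω, g ω * X ω ∂μ ≤ - d * ∫ ω, g ω ∂μ := by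
    have e1 : ∫ ω, g ω * X ω ∂μ = ∫ ω, (μ[g * X | m]) ω ∂μ := (integral_condExp hm).symm
    rw [e1, ← integral_const_mul]
    refine integral_mono_ae integrable_condExp (hgI.const_mul _) ?_
    filter_upwards [hpull, hd] with ω h h2
    rw [h]
    simp only [Pi.mul_apply]
    by_cases hω : ω ∈ S
    · nlinarith [hg0 ω, h2 hω]
    · simp [hg, hω]
  have h2 : ∫ ω, g ω ∂μ ≤ ∫ ω, Real.exp (r * Y ω) ∂μ := by
    refine integral_mono hgI heI fun ω => ?_
    exact Set.indicator_le_self' (fun _ _ => (Real.exp_pos _).le) ω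
  have h3 : ∫ ω, Real.exp (r * (Y ω + X ω)) ∂μ ≤
      ∫ ω, ((1 + (r * L) ^ 2) * g ω + r * (g ω * X ω) + Real.exp (r * (θ + L))) ∂μ := by
    have hi : Integrable (fun ω => g ω * X ω) μ := hgXI
    refine integral_mono_ae ?_ (((hgI.const_mul _).add (hi.const_mul r)).add
      (integrable_const _)) ?_
    · refine Integrable.of_bound (by fun_prop) (Real.exp (r * (K + L))) ?_
      filter_upwards [hYK, hXL] with ω h h'
      rw [Real.norm_eq_abs, Real.abs_exp]
      exact Real.exp_le_exp.mpr (mul_le_mul_of_nonneg_left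
        (add_le_add (abs_le.mp h).2 (abs_le.mp h').2) hr)
    · filter_upwards [hXL] with ω h
      by_cases hω : ω ∈ S
      · have hgω : g ω = Real.exp (r * Y ω) := by simp [hg, hω]
        have ha : |r * X ω| ≤ r * L := by
          rw [abs_mul, abs_of_nonneg hr]; exact mul_le_mul_of_nonneg_left h hr
        have hb := aux_exp (r * X ω) (ha.trans hrL)
        have hc : (r * X ω) ^ 2 ≤ (r * L) ^ 2 := sq_le_sq' (by linarith [(abs_le.mp ha).1]) (abs_le.mp ha).2
        rw [mul_add, Real.exp_add, hgω]
        have := mul_le_mul_of_nonneg_left (hb.trans (by linarith : _ ≤ 1 + r * X ω + (r * L) ^ 2)) (Real.exp_pos (r * Y ω)).le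
        have := Real.exp_pos (r * (θ + L))
        linarith
      · have hgω : g ω = 0 := by simp [hg, hω]
        have : Y ω < θ := not_le.mp hω
        simp only [hgω, mul_zero, zero_mul, zero_add]
        exact Real.exp_le_exp.mpr (mul_le_mul_of_nonneg_left
          (add_le_add this.le (abs_le.mp h).2) hr)
  have h4 : ∫ ω, ((1 + (r * L) ^ 2) * g ω + r * (g ω * X ω) + Real.exp (r * (θ + L))) ∂μ
      = (1 + (r * L) ^ 2) * ∫ ω, g ω ∂μ + r * ∫ ω, g ω * X ω ∂μ + Real.exp (r * (θ + L)) := by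
    have hi : Integrable (fun ω => g ω * X ω) μ := hgXI
    have hj : Integrable (fun ω => (1 + (r * L) ^ 2) * g ω + r * (g ω * X ω)) μ :=
      (hgI.const_mul _).add (hi.const_mul r)
    rw [integral_add hj (integrable_const _),
      integral_add (hgI.const_mul _) (hi.const_mul r), integral_const_mul, integral_const_mul]
    simp
  have h5 := mul_le_mul_of_nonneg_left h1 hr
  have h6 := mul_le_mul_of_nonneg_left h2 hρ
  linarith

open MeasureTheory

/-- Multi-step Lyapunov drift lemma, tail-probability bound: if the
adapted process `Z` starts at `0`, has a negative `t₀`-step conditional drift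
`≤ -ν t₀` on the event `{Z t ≥ θ}`, and bounded increments `|Z (t+1) - Z t| ≤ ν_max`,
then for every `t` and every `p ∈ (0,1)`, `P(Z t ≥ z) ≤ p`, where
`z = θ + t₀ ν_max + t₀ (4 ν_max² / ν)(log (8 ν_max² / ν²) + log (1/p))`. -/
theorem stmt4 {Ω : Type*} {mΩ : MeasurableSpace Ω} (μ : Measure Ω) [IsProbabilityMeasure μ]
    (ℱ : Filtration ℕ mΩ) (Z : ℕ → Ω → ℝ) (hadapted : Adapted ℱ Z)
    (hZ0 : ∀ ω, Z 0 ω = 0)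
    (t₀ : ℕ) (ht₀ : 0 < t₀) (θ ν νmax : ℝ)
    (hθ : 0 ≤ θ) (hν : 0 < ν) (hννmax : ν ≤ νmax)
    (hdrift : ∀ t, ∀ᵐ ω ∂μ, θ ≤ Z t ω →
      (μ[Z (t + t₀) - Z t | ℱ t]) ω ≤ -ν * t₀)
    (hbdd : ∀ t, ∀ᵐ ω ∂μ, |Z (t + 1) ω - Z t ω| ≤ νmax) :
    ∀ t, ∀ p : ℝ, 0 < p → p < 1 →
      μ {ω | θ + t₀ * νmax + t₀ * (4 * νmax ^ 2 / ν) *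
          (Real.log (8 * νmax ^ 2 / ν ^ 2) + Real.log (1 / p)) ≤ Z t ω}
        ≤ ENNReal.ofReal p := by
  have hM : 0 < νmax := hν.trans_le hννmax
  have hT : (0 : ℝ) < t₀ := by exact_mod_cast ht₀
  have hmeas : ∀ t, Measurable (Z t) := fun t => (hadapted t).mono (ℱ.le t) le_rfl
  have hZb : ∀ t, ∀ᵐ ω ∂μ, |Z t ω| ≤ t * νmax := fun t => by
    filter_upwards [aux_bdd μ Z νmax hbdd 0 t] with ω h
    simpa [hZ0] using h
  set q : ℝ := ν / νmax with hq
  have hq0 : 0 < q := by positivity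
  have hq1 : q ≤ 1 := (div_le_one hM).mpr hννmax
  set r : ℝ := ν / (4 * t₀ * νmax ^ 2) with hr
  have hr0 : 0 < r := by positivity
  have hrL : r * (t₀ * νmax) = q / 4 := by rw [hr, hq]; field_simp
  have hrd : r * (ν * t₀) = q ^ 2 / 4 := by rw [hr, hq]; field_simp
  set A : ℝ := Real.exp (r * (θ + t₀ * νmax)) with hA
  have hA0 : 0 < A := Real.exp_pos _
  set B : ℝ := 8 * νmax ^ 2 / ν ^ 2 with hB
  have hB0 : 0 < B := by positivity
  have hBq : B * q ^ 2 = 8 := by rw [hB, hq]; field_simp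
  have hB1 : 1 ≤ B := by nlinarith
  have key : ∀ t, ∫ ω, Real.exp (r * Z t ω) ∂μ ≤ B * A := by
    intro t
    induction t using Nat.strong_induction_on with
    | _ t ih =>
      rcases lt_or_ge t t₀ with h | h
      · have : ∫ ω, Real.exp (r * Z t ω) ∂μ ≤ ∫ _, A ∂μ := by
          refine integral_mono_of_nonneg (Filter.Eventually.of_forall fun _ => (Real.exp_pos _).le)
            (integrable_const _) ?_
          filter_upwards [hZb t] with ω hω
          refine Real.exp_le_exp.mpr (mul_le_mul_of_nonneg_left ?_ hr0.le)
          have : (t : ℝ) * νmax ≤ t₀ * νmax := by gcongr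
          linarith [(abs_le.mp hω).2]
        simp only [integral_const, probReal_univ, one_smul] at this
        nlinarith
      · obtain ⟨s, rfl⟩ := Nat.exists_eq_add_of_le' h
        have hs := ih s (by omega)
        have hρ : 0 ≤ 1 - r * (ν * t₀) + (r * (t₀ * νmax)) ^ 2 := by
          rw [hrd, hrL]; nlinarith
        have st := aux_step (ℱ s) μ (ℱ.le s) (Z s) (Z (s + t₀) - Z s) (hadapted s)
          ((hmeas _).sub (hmeas _)) (s * νmax) θ (ν * t₀) (t₀ * νmax) r hr0.le
          (by rw [hrL]; linarith) (hZb s) (aux_bdd μ Z νmax hbdd s t₀) hρ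
          (by filter_upwards [hdrift s] with ω h h'
              have := h h'
              linarith)
        simp only [Pi.sub_apply, add_sub_cancel] at st
        have h6 := mul_le_mul_of_nonneg_left hs hρ
        refine st.trans ((add_le_add_left h6 _).trans ?_)
        rw [hrd, hrL, ← hA]
        have : (1 - q ^ 2 / 4 + (q / 4) ^ 2) * (B * A) + A = B * A - (3/16) * (B * q ^ 2) * A + A := by ring
        rw [this, hBq]
        linarith
  intro t p hp hp1
  set z : ℝ := θ + t₀ * νmax + t₀ * (4 * νmax ^ 2 / ν) * (Real.log B + Real.log (1 / p)) with hz
  have hez : Real.exp (r * z) * p = B * A := by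
    have : r * z = r * (θ + t₀ * νmax) + (Real.log B + Real.log (1 / p)) := by
      have h1 : r * (t₀ * (4 * νmax ^ 2 / ν)) = 1 := by rw [hr]; field_simp
      rw [hz, mul_add, ← mul_assoc r, h1, one_mul]
    rw [this, Real.exp_add, Real.exp_add, Real.exp_log hB0, Real.exp_log (by positivity), ← hA]
    field_simp
  have hI : Integrable (fun ω => Real.exp (r * Z t ω)) μ := by
    have := hmeas t
    refine Integrable.of_bound (by fun_prop) (Real.exp (r * (t * νmax))) ?_
    filter_upwards [hZb t] with ω h
    rw [Real.norm_eq_abs, Real.abs_exp]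
    exact Real.exp_le_exp.mpr (mul_le_mul_of_nonneg_left (abs_le.mp h).2 hr0.le)
  have mk := mul_meas_ge_le_integral_of_nonneg
    (Filter.Eventually.of_forall fun ω => (Real.exp_pos (r * Z t ω)).le) hI (Real.exp (r * z))
  have hset : {ω | Real.exp (r * z) ≤ Real.exp (r * Z t ω)} = {ω | z ≤ Z t ω} := by
    ext ω
    simp [hr0]
  rw [hset] at mk
  have h7 := (mk.trans (key t)).trans hez.ge
  have h8 := le_of_mul_le_mul_left h7 (Real.exp_pos _)
  rw [← ofReal_measureReal]
  exact ENNReal.ofReal_le_ofReal h8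
end

section
/- Consider the COCO-Hard iteration, and suppose there exists M ∈ M with g_t(M) ≤ 0 for every t ∈ {1,…,T} and h(M) ≤ 0. Then Σ_{t=1}^{T} (f_t(M_t) − f_t(M)) ≤ T V L² / (4α) + α D² / V. -/
open scoped RealInnerProductSpace

theorem aux_grad {EH : Type*} [NormedAddCommGroup EH] [InnerProductSpace ℝ EH]
    [FiniteDimensional ℝ EH] (f : EH → ℝ) (hc : ConvexOn ℝ Set.univ f)
    (hd : Differentiable ℝ f) (m x : EH) :
    f m + ⟪x - m, gradient f m⟫ ≤ f x := by
  have hc' : ConvexOn ℝ Set.univ (f ∘ (AffineMap.lineMap m x : ℝ →ᵃ[ℝ] EH)) := by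
    simpa using hc.comp_affineMap (AffineMap.lineMap m x : ℝ →ᵃ[ℝ] EH)
  have hl : HasDerivAt (AffineMap.lineMap m x : ℝ →ᵃ[ℝ] EH) (x - m) (0:ℝ) :=
    AffineMap.hasDerivAt_lineMap
  have hg : HasFDerivAt f (InnerProductSpace.toDual ℝ EH (gradient f m))
      ((AffineMap.lineMap m x : ℝ →ᵃ[ℝ] EH) 0) := by
    have := (hd m).hasGradientAt.hasFDerivAt
    simpa using this
  have hder := hg.comp_hasDerivAt (0:ℝ) hl
  have := hc'.le_slope_of_hasDerivAt (Set.mem_univ 0) (Set.mem_univ 1) zero_lt_one hder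
  rw [InnerProductSpace.toDual_apply_apply, slope_def_field, real_inner_comm] at this
  simp only [Function.comp_apply, AffineMap.lineMap_apply_one, AffineMap.lineMap_apply_zero,
    sub_zero, div_one] at this
  linarith

theorem aux_norm {EH : Type*} [NormedAddCommGroup EH] [InnerProductSpace ℝ EH]
    (a b : EH) (s : ℝ) : ‖(1 - s) • a + s • b‖ ^ 2 =
      (1 - s) * ‖a‖ ^ 2 + s * ‖b‖ ^ 2 - s * (1 - s) * ‖b - a‖ ^ 2 := by
  rw [norm_add_sq_real, norm_sub_sq_real, norm_smul, norm_smul, inner_smul_left, inner_smul_right,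
    mul_pow, mul_pow, real_inner_comm a b]
  simp only [Real.norm_eq_abs, sq_abs, conj_trivial]
  ring

theorem aux_strong {EH : Type*} [NormedAddCommGroup EH] [InnerProductSpace ℝ EH]
    (S : Set EH) (hS : Convex ℝ S) (φ : EH → ℝ) (hφ : ConvexOn ℝ Set.univ φ) (α : ℝ)
    (m p x : EH) (hp : p ∈ S) (hx : x ∈ S)
    (hmin : ∀ y ∈ S, φ p + α * ‖p - m‖ ^ 2 ≤ φ y + α * ‖y - m‖ ^ 2) :
    φ p + α * ‖p - m‖ ^ 2 + α * ‖x - p‖ ^ 2 ≤ φ x + α * ‖x - m‖ ^ 2 := by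
  have key : ∀ s : ℝ, 0 < s → s ≤ 1 →
      φ p + α * ‖p - m‖ ^ 2 + (1 - s) * (α * ‖x - p‖ ^ 2) ≤ φ x + α * ‖x - m‖ ^ 2 := by
    intro s hs hs1
    have h1 := hmin ((1 - s) • p + s • x) (hS hp hx (by linarith) hs.le (by ring))
    have h2 := hφ.2 (Set.mem_univ p) (Set.mem_univ x) (by linarith : 0 ≤ 1 - s) hs.le (by ring)
    have e : (1 - s) • p + s • x - m = (1 - s) • (p - m) + s • (x - m) := by module
    rw [e, aux_norm, sub_sub_sub_cancel_right] at h1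
    simp only [smul_eq_mul] at h2
    refine le_of_mul_le_mul_left ?_ hs
    linarith
  have ht : Filter.Tendsto (fun n : ℕ => φ p + α * ‖p - m‖ ^ 2 +
      (1 - 1 / ((n : ℝ) + 1)) * (α * ‖x - p‖ ^ 2)) Filter.atTop
      (nhds (φ p + α * ‖p - m‖ ^ 2 + (1 - 0) * (α * ‖x - p‖ ^ 2))) :=
    ((tendsto_one_div_add_atTop_nhds_zero_nat.const_sub 1).mul_const _).const_add _
  rw [sub_zero, one_mul] at ht
  refine le_of_tendsto' ht fun n => key _ (by positivity) ?_
  rw [div_le_one (by positivity)]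
  linarith [(Nat.cast_nonneg n : (0:ℝ) ≤ n)]

/-- Regret bound for the COCO-Hard iteration: if `M ∈ 𝓜`
satisfies `g_t(M) ≤ 0` for all `t ∈ {1,…,T}` and `h(M) ≤ 0`, then
`Σ_{t=1}^T (f_t(M_t) − f_t(M)) ≤ T V L²/(4α) + α D²/V`. -/
theorem stmt15 {EH : Type*} [NormedAddCommGroup EH] [InnerProductSpace ℝ EH]
    [FiniteDimensional ℝ EH]
    (Mset : Set EH) (hMset : Convex ℝ Mset) (D : ℝ)
    (hD : ∀ x ∈ Mset, ∀ y ∈ Mset, ‖x - y‖ ≤ D)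
    (T : ℕ) (f g : ℕ → EH → ℝ) (h : EH → ℝ) (L : ℝ)
    (hf_conv : ∀ t ∈ Finset.Icc 1 T, ConvexOn ℝ Set.univ (f t))
    (hf_diff : ∀ t ∈ Finset.Icc 1 T, Differentiable ℝ (f t))
    (hf_grad : ∀ t ∈ Finset.Icc 1 T, ∀ x ∈ Mset, ‖gradient (f t) x‖ ≤ L)
    (hg_conv : ∀ t ∈ Finset.Icc 1 T, ConvexOn ℝ Set.univ (g t))
    (hh_conv : ConvexOn ℝ Set.univ h)
    (V γ η α : ℝ) (hV : 0 < V) (hγ : 0 < γ) (hη : 0 < η) (hα : 0 < α)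
    (M : ℕ → EH)
    (hM1 : M 1 ∈ Mset)
    (hMmem : ∀ t : ℕ, 1 ≤ t → M (t + 1) ∈ Mset)
    (hMmin : ∀ t : ℕ, 1 ≤ t → ∀ y ∈ Mset,
      V * ⟪M (t + 1) - M t, gradient (f t) (M t)⟫ + γ * max (g t (M (t + 1))) 0 +
          η * max (h (M (t + 1))) 0 + α * ‖M (t + 1) - M t‖ ^ 2 ≤
        V * ⟪y - M t, gradient (f t) (M t)⟫ + γ * max (g t y) 0 +
          η * max (h y) 0 + α * ‖y - M t‖ ^ 2)
    (Mfeas : EH) (hMfeas : Mfeas ∈ Mset)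
    (hMfeas_g : ∀ t ∈ Finset.Icc 1 T, g t Mfeas ≤ 0) (hMfeas_h : h Mfeas ≤ 0) :
    ∑ t ∈ Finset.Icc 1 T, (f t (M t) - f t Mfeas) ≤
      (T : ℝ) * V * L ^ 2 / (4 * α) + α * D ^ 2 / V := by
  have hmem : ∀ t, 1 ≤ t → M t ∈ Mset := by
    intro t ht
    obtain rfl | h1 := ht.eq_or_lt
    · exact hM1
    · obtain ⟨k, rfl⟩ : ∃ k, t = k + 1 := ⟨t - 1, by omega⟩
      exact hMmem k (by omega)
  have step : ∀ t ∈ Finset.Icc 1 T, f t (M t) - f t Mfeas ≤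
      V * L ^ 2 / (4 * α) + (α / V * ‖Mfeas - M t‖ ^ 2 - α / V * ‖Mfeas - M (t + 1)‖ ^ 2) := by
    intro t ht
    have h1t := (Finset.mem_Icc.1 ht).1
    have hφ : ConvexOn ℝ Set.univ (fun y => V * ⟪y - M t, gradient (f t) (M t)⟫ +
        γ * max (g t y) 0 + η * max (h y) 0) := by
      have c0 : ConvexOn ℝ Set.univ (fun _ : EH => (0:ℝ)) := convexOn_const _ convex_univ
      have c1 : ConvexOn ℝ Set.univ (fun y => V * ⟪y - M t, gradient (f t) (M t)⟫) := by
        refine ⟨convex_univ, fun x _ y _ a b _ _ hab => le_of_eq ?_⟩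
        simp only [inner_sub_left, inner_add_left, real_inner_smul_left, smul_eq_mul]
        linear_combination V * ⟪M t, gradient (f t) (M t)⟫ * hab
      exact (c1.add (((hg_conv t ht).sup c0).smul hγ.le)).add ((hh_conv.sup c0).smul hη.le)
    have hs := aux_strong Mset hMset _ hφ α (M t) (M (t + 1)) Mfeas (hMmem t h1t) hMfeas
      (hMmin t h1t)
    simp only [max_eq_right (hMfeas_g t ht), max_eq_right hMfeas_h, mul_zero, add_zero] at hs
    have p1 : 0 ≤ γ * max (g t (M (t + 1))) 0 := mul_nonneg hγ.le (le_max_right _ _)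
    have p2 : 0 ≤ η * max (h (M (t + 1))) 0 := mul_nonneg hη.le (le_max_right _ _)
    have hg := aux_grad (f t) (hf_conv t ht) (hf_diff t ht) (M t) Mfeas
    have hL := hf_grad t ht (M t) (hmem t h1t)
    have hin := abs_le.1 (abs_real_inner_le_norm (M (t + 1) - M t) (gradient (f t) (M t)))
    set d := ‖M (t + 1) - M t‖
    have hd : 0 ≤ d := norm_nonneg _
    have hdL : d * ‖gradient (f t) (M t)‖ ≤ d * L := mul_le_mul_of_nonneg_left hL hd
    have h3 : V * (-(d * L)) ≤ V * ⟪M (t + 1) - M t, gradient (f t) (M t)⟫ :=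
      mul_le_mul_of_nonneg_left (by linarith) hV.le
    have h4 : V * (f t (M t) - f t Mfeas) ≤ V * (-⟪Mfeas - M t, gradient (f t) (M t)⟫) :=
      mul_le_mul_of_nonneg_left (by linarith) hV.le
    have h5 : V * (d * L) - α * d ^ 2 ≤ V ^ 2 * L ^ 2 / (4 * α) := by
      rw [le_div_iff₀ (by positivity)]
      nlinarith [sq_nonneg (V * L - 2 * α * d)]
    refine le_of_mul_le_mul_left ?_ hV
    have e : V * (V * L ^ 2 / (4 * α) + (α / V * ‖Mfeas - M t‖ ^ 2 -
        α / V * ‖Mfeas - M (t + 1)‖ ^ 2)) = V ^ 2 * L ^ 2 / (4 * α) +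
        (α * ‖Mfeas - M t‖ ^ 2 - α * ‖Mfeas - M (t + 1)‖ ^ 2) := by
      field_simp
    rw [e]
    linarith
  have tel : ∀ n : ℕ, ∑ t ∈ Finset.Icc 1 n, (V * L ^ 2 / (4 * α) +
      (α / V * ‖Mfeas - M t‖ ^ 2 - α / V * ‖Mfeas - M (t + 1)‖ ^ 2)) =
      n * (V * L ^ 2 / (4 * α)) +
      (α / V * ‖Mfeas - M 1‖ ^ 2 - α / V * ‖Mfeas - M (n + 1)‖ ^ 2) := by
    intro n
    induction n with
    | zero => simp
    | succ k ih =>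
      rw [Finset.sum_Icc_succ_top (by omega), ih]
      push_cast
      ring
  refine (Finset.sum_le_sum step).trans ?_
  rw [tel]
  have hD2 : ‖Mfeas - M 1‖ ^ 2 ≤ D ^ 2 :=
    pow_le_pow_left₀ (norm_nonneg _) (hD _ hMfeas _ hM1) 2
  have q1 : α / V * ‖Mfeas - M 1‖ ^ 2 ≤ α / V * D ^ 2 :=
    mul_le_mul_of_nonneg_left hD2 (by positivity)
  have q2 : 0 ≤ α / V * ‖Mfeas - M (T + 1)‖ ^ 2 := by positivity
  have e : (T : ℝ) * V * L ^ 2 / (4 * α) + α * D ^ 2 / V =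
    T * (V * L ^ 2 / (4 * α)) + α / V * D ^ 2 := by ring
  rw [e]
  linarith
end
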